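/- arXiv:1705.08499 — 3 statements merged into one kernel-verified Lean document; each statement's English description precedes it below -/
import Mathlib

section
/- Let a, b, c, d be nonnegative reals with a + b + c + d = 1, b + c ≤ a + d, b + c > 0, and a + d > 0. Then the prediction advantage PA = (b − a)/(b + c) satisfies PA ≤ TN, where TN = d/(a + d) is the true negative rate; moreover the inequality is strict whenever c > 0. -/
/-- The prediction advantage lower-bounds the true negative rate, strictly when `c > 0`. -/
theorem pa_le_tn (a b c d : ℝ)
    (ha : 0 ≤ a) (hb : 0 ≤ b) (hc : 0 ≤ c) (hd : 0 ≤ d)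
    (hsum : a + b + c + d = 1) (himb : b + c ≤ a + d)
    (hbc : 0 < b + c) (had : 0 < a + d) :
    (b - a) / (b + c) ≤ d / (a + d)
    ∧ (0 < c → (b - a) / (b + c) < d / (a + d)) := by
  have h1 : 0 ≤ a * (a + d - (b + c)) := mul_nonneg ha (by linarith)
  constructor
  · rw [div_le_div_iff₀ hbc had]
    have h2 : 0 ≤ c * (a + d) := mul_nonneg hc had.le
    linarith
  · intro hc'
    rw [div_lt_div_iff₀ hbc had]
    have h2 : 0 < c * (a + d) := mul_pos hc' had
    linarith
end

section
/- Let a, b, c, d be nonnegative reals with a + b + c + d = 1, b + c ≤ a + d, b + c > 0, and a + d > 0. Then the prediction advantage PA = (b − a)/(b + c) satisfies PA ≤ (TP + TN)/2, where TP = b/(b + c) and TN = d/(a + d); moreover the inequality is strict whenever a > 0 or c > 0 (equivalently, whenever TP < 1 or TN < 1). -/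
/-- The prediction advantage lower-bounds the balanced accuracy `(TP + TN)/2`,
strictly when `a > 0` or `c > 0`. -/
theorem pa_le_balanced_accuracy (a b c d : ℝ)
    (ha : 0 ≤ a) (hb : 0 ≤ b) (hc : 0 ≤ c) (hd : 0 ≤ d)
    (hsum : a + b + c + d = 1) (himb : b + c ≤ a + d)
    (hbc : 0 < b + c) (had : 0 < a + d) :
    (b - a) / (b + c) ≤ (b / (b + c) + d / (a + d)) / 2
    ∧ (0 < a ∨ 0 < c → (b - a) / (b + c) < (b / (b + c) + d / (a + d)) / 2) := by
  have key : (b / (b + c) + d / (a + d)) / 2 - (b - a) / (b + c)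
      = (a / (b + c) - a / (a + d)) / 2 + (a + c) / (b + c) / 2 := by
    field_simp
    ring
  have h1 : a / (a + d) ≤ a / (b + c) := div_le_div_of_nonneg_left ha hbc himb
  have h2 : 0 ≤ (a + c) / (b + c) := by positivity
  refine ⟨by linarith, fun h => ?_⟩
  have h3 : 0 < (a + c) / (b + c) := by
    apply div_pos _ hbc
    rcases h with h | h <;> linarith
  linarith
end

section
/- Let a, b, c, d be nonnegative reals with a + b + c + d = 1, b + c ≤ a + d, b + c > 0, a + b > 0, and b > 0. Then the prediction advantage PA = (b − a)/(b + c) satisfies PA ≤ F, where F = 2·PRE·REC/(PRE + REC) = 2b/(a + 2b + c) is the F-measure with PRE = b/(a + b) and REC = b/(b + c); moreover the inequality is strict whenever a > 0 (equivalently, whenever PRE < 1). -/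
/-- The prediction advantage lower-bounds the F-measure (the harmonic mean of precision
and recall), strictly when `a > 0`. -/
theorem pa_le_f_measure (a b c d : ℝ)
    (ha : 0 ≤ a) (hb : 0 ≤ b) (hc : 0 ≤ c) (hd : 0 ≤ d)
    (hsum : a + b + c + d = 1) (himb : b + c ≤ a + d)
    (hbc : 0 < b + c) (hab : 0 < a + b) (hbpos : 0 < b) :
    (b - a) / (b + c)
        ≤ 2 * (b / (a + b)) * (b / (b + c)) / (b / (a + b) + b / (b + c))
    ∧ (0 < a →
        (b - a) / (b + c)
          < 2 * (b / (a + b)) * (b / (b + c)) / (b / (a + b) + b / (b + c))) := by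
  have hF : 2 * (b / (a + b)) * (b / (b + c)) / (b / (a + b) + b / (b + c))
      = 2 * b / (a + 2 * b + c) := by
    have h1 : a + b ≠ 0 := hab.ne'
    have h2 : b + c ≠ 0 := hbc.ne'
    have h3 : a + 2 * b + c ≠ 0 := by positivity
    have h4 : b / (a + b) + b / (b + c) ≠ 0 := by positivity
    rw [div_eq_div_iff h4 h3]
    field_simp
    ring
  have h3 : 0 < a + 2 * b + c := by positivity
  have e1 := mul_nonneg hb hc
  have e2 := mul_nonneg ha hb
  have e3 := mul_nonneg ha hc
  rw [hF]
  constructor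
  · rw [div_le_div_iff₀ hbc h3]
    nlinarith [mul_nonneg ha ha]
  · intro h
    rw [div_lt_div_iff₀ hbc h3]
    nlinarith [mul_pos h h]
end
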